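/- arXiv:1602.08457 — 2 statements merged into one kernel-verified Lean document; each statement's English description precedes it below -/
import Mathlib

section
/- Let M ≥ 0, N ≥ 1, k ∈ I_{M,N}, (ℓ,η) ∈ D^k_{M,N}, γ ∈ Γ^k_{M,N}, j ∈ {1,…,M}, and t ∈ ℂ^N; fix x_i ∈ t_{k_i} + γ_i + √−1·[0,π] for each i ≠ j. Set P⁺ := {t_s + ℓ_s η : 1 ≤ s ≤ k_j} ∪ {x_i − η : i < j}, P⁻ := {t_s − ℓ_s η : k_j ≤ s ≤ N} ∪ {−t_s − ℓ_s η : 1 ≤ s ≤ N} ∪ {−ξ̃₊, −ξ̃₋} ∪ {x_i + η : i > j} ∪ {−x_i + η : i ≠ j}, and S := ((P⁺ − τℤ_{≥0}) ∪ (P⁻ + τℤ_{≥0})) + π√−1·ℤ. Then for every m ∈ I_{M,N}, the function x_j ↦ w_k(x;t)·β_m(x;t) extends to a function holomorphic on ℂ ∖ S; that is, all poles of x_j ↦ w_k(x;t)·β_m(x;t) are contained in S. -/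
open Complex MeasureTheory

noncomputable section

namespace BQKZ

/-- `(z;p)_∞ = ∏_{m ≥ 0} (1 - z pᵐ)`; used with `p = q²`. -/
def poch (p z : ℂ) : ℂ := ∏' m : ℕ, (1 - z * p ^ m)

/-- renormalized Jacobi theta `θ(z) = (z;p)_∞ (p z⁻¹;p)_∞`, with `p = q²`. -/
def theta (p z : ℂ) : ℂ := poch p z * poch p (p * z⁻¹)

/-- `q² = e^{2τ}` where `q = e^τ`. -/
def qsq (τ : ℂ) : ℂ := exp (2 * τ)

/-- `ξ̃₊ = ξ₊ - η/2 - τ/2`. -/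
def xiP (τ η ξp : ℂ) : ℂ := ξp - η / 2 - τ / 2

/-- `ξ̃₋ = ξ₋ - η/2`. -/
def xiM (η ξm : ℂ) : ℂ := ξm - η / 2

/-- `n_k(r) = #{i : k i = r}`. -/
def nk {M N : ℕ} (k : Fin M → Fin N) (r : Fin N) : ℕ :=
  (Finset.univ.filter fun i => k i = r).card

/-- `φ_{k;r}`. -/
def phiC (η ξp ξm : ℂ) {N M : ℕ} (ℓ : Fin N → ℂ) (k : Fin M → Fin N) (r : Fin N) : ℂ :=
  (∏ i ∈ Finset.univ.filter fun i : Fin M => k i = r,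
      exp (2 * (η - ξp - ξm) +
        4 * ((M : ℂ) - ((i : ℕ) + 1) - ∑ s ∈ Finset.univ.filter fun s : Fin N => r ≤ s, ℓ s) * η)) *
    exp (-4 * ℓ r * η * ((Finset.univ.filter fun i : Fin M => r < k i).card : ℂ))

/-- `Φ_k(t)`. -/
def PhiF (τ η ξp ξm : ℂ) {N M : ℕ} (ℓ : Fin N → ℂ) (k : Fin M → Fin N) (t : Fin N → ℂ) : ℂ :=
  ∏ r, theta (qsq τ) (exp (2 * t r)) / theta (qsq τ) (phiC η ξp ξm ℓ k r * exp (2 * t r))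

/-- `F(x;t)`. -/
def Ffun (τ η : ℂ) {N : ℕ} (ℓ : Fin N → ℂ) (x : ℂ) (t : Fin N → ℂ) : ℂ :=
  ∏ s, (poch (qsq τ) (exp (-2 * (t s + x - ℓ s * η))) * poch (qsq τ) (exp (-2 * (t s - x - ℓ s * η)))) /
       (poch (qsq τ) (exp (-2 * (t s + x + ℓ s * η))) * poch (qsq τ) (exp (-2 * (t s - x + ℓ s * η))))

/-- `g(x)`. -/
def gfun (τ η ξp ξm : ℂ) (x : ℂ) : ℂ :=
  (poch (qsq τ) (qsq τ * exp (2 * (xiP τ η ξp - x))) * poch (qsq τ) (qsq τ * exp (2 * (xiM η ξm - x)))) /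
  (poch (qsq τ) (exp (2 * (-xiP τ η ξp - x))) * poch (qsq τ) (exp (2 * (-xiM η ξm - x))))

/-- `h(x)`. -/
def hfun (τ η : ℂ) (x : ℂ) : ℂ :=
  (1 - exp (-2 * x)) * poch (qsq τ) (qsq τ * exp (-2 * (x + η))) / poch (qsq τ) (exp (-2 * (x - η)))

/-- `ψ_{k;i}`. -/
def psiC (τ η ξp ξm : ℂ) {N M : ℕ} (ℓ : Fin N → ℂ) (k : Fin M → Fin N) (i : Fin M) : ℂ :=
  xiP τ η ξp + xiM η ξm + τ + ℓ (k i) * η +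
    2 * ((∑ s ∈ Finset.univ.filter fun s : Fin N => k i < s, ℓ s) - (M : ℂ) + ((i : ℕ) + 1)) * η

/-- `u_{k;i}(x;t)`. -/
def ufun (τ η ξp ξm : ℂ) {N M : ℕ} (ℓ : Fin N → ℂ) (k : Fin M → Fin N) (i : Fin M) (x : ℂ)
    (t : Fin N → ℂ) : ℂ :=
  exp (-t (k i)) * theta (qsq τ) (exp (2 * (x - t (k i) + psiC τ η ξp ξm ℓ k i))) *
    (∏ s ∈ Finset.univ.filter fun s : Fin N => k i < s,
      theta (qsq τ) (exp (2 * (x - t s - ℓ s * η)))) /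
    ∏ s ∈ Finset.univ.filter fun s : Fin N => k i ≤ s,
      theta (qsq τ) (exp (2 * (x - t s + ℓ s * η)))

/-- `w_k(x;t)/Φ_k(t)` (the weight function with the `Φ_k` prefactor cancelled). -/
def w0 (τ η ξp ξm : ℂ) {N M : ℕ} (ℓ : Fin N → ℂ) (k : Fin M → Fin N) (x : Fin M → ℂ)
    (t : Fin N → ℂ) : ℂ :=
  (∏ i, Ffun τ η ℓ (x i) t * gfun τ η ξp ξm (x i) * ufun τ η ξp ξm ℓ k i (x i) t) *
    ∏ p ∈ Finset.univ.filter fun p : Fin M × Fin M => p.1 < p.2,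
      hfun τ η (x p.1 + x p.2) * hfun τ η (x p.1 - x p.2)

/-- the weight function `w_k(x;t)`. -/
def wfun (τ η ξp ξm : ℂ) {N M : ℕ} (ℓ : Fin N → ℂ) (k : Fin M → Fin N) (x : Fin M → ℂ)
    (t : Fin N → ℂ) : ℂ :=
  PhiF τ η ξp ξm ℓ k t * w0 τ η ξp ξm ℓ k x t

/-- sign `ε_i = ±1` encoded by a boolean. -/
def sg {M : ℕ} (ε : Fin M → Bool) (i : Fin M) : ℂ := if ε i then 1 else -1

/-- `S_M k`: rearrangements of `k`. -/
def rearr {M N : ℕ} (k : Fin M → Fin N) : Finset (Fin M → Fin N) :=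
  Finset.univ.filter fun m => ∀ r, nk m r = nk k r

/-- `β_k(x;t)`, the coefficients of the boundary Bethe vectors. -/
def betaF (η ξm : ℂ) {N M : ℕ} (ℓ : Fin N → ℂ) (k : Fin M → Fin N) (x : Fin M → ℂ)
    (t : Fin N → ℂ) : ℂ :=
  exp ((∑ i, ((nk k (k i) : ℂ) / 2 - ℓ (k i))) * η) *
    ∑ m ∈ rearr k, ∑ ε : Fin M → Bool,
      (∏ i,
          sg ε i * sinh (sg ε i * x i - xiM η ξm) / sinh (t (m i) + sg ε i * x i - ℓ (m i) * η) *
            (∏ s ∈ Finset.univ.filter fun s : Fin N => m i < s,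
              sinh (t s + sg ε i * x i + ℓ s * η) / sinh (t s + sg ε i * x i - ℓ s * η)) *
            ∏ s, sinh (t s - sg ε i * x i + ℓ s * η) / sinh (t s - sg ε i * x i - ℓ s * η)) *
        (∏ p ∈ Finset.univ.filter fun p : Fin M × Fin M => p.1 < p.2,
          sinh (sg ε p.1 * x p.1 + sg ε p.2 * x p.2 + η) /
            sinh (sg ε p.1 * x p.1 + sg ε p.2 * x p.2)) *
        ∏ p ∈ Finset.univ.filter fun p : Fin M × Fin M => m p.1 < m p.2,
          sinh (sg ε p.1 * x p.1 - sg ε p.2 * x p.2 - η) /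
            sinh (sg ε p.1 * x p.1 - sg ε p.2 * x p.2)

/-- `(ℓ,η) ∈ D^k_{M,N}`. -/
def Dmn (η : ℂ) {N M : ℕ} (ℓ : Fin N → ℂ) (k : Fin M → Fin N) : Prop :=
  ∀ r, (ℓ r * η).re > max 0 (((nk k r : ℝ) - 1) / 2 * η.re)

/-- the (0-based) position `i_k(s;r) = ∑_{s' < r} n_k(s') + s`. -/
def blockIdx {M N : ℕ} (k : Fin M → Fin N) (r : Fin N) (s : ℕ) : ℕ :=
  (∑ s' ∈ Finset.univ.filter fun s' : Fin N => s' < r, nk k s') + s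

/-- `γ ∈ Γ^k_{M,N}`. -/
def Gam (η : ℂ) {N M : ℕ} (ℓ : Fin N → ℂ) (k : Fin M → Fin N) (γ : Fin M → ℂ) : Prop :=
  (∀ i, -(ℓ (k i) * η).re < (γ i).re ∧ (γ i).re < (ℓ (k i) * η).re) ∧
    ∀ r : Fin N, ∀ s : ℕ, s + 1 < nk k r →
      ∀ (h1 : blockIdx k r s < M) (h2 : blockIdx k r (s + 1) < M),
        (γ ⟨blockIdx k r (s + 1), h2⟩).re ≤ (γ ⟨blockIdx k r s, h1⟩).re ∧
          (γ ⟨blockIdx k r (s + 1), h2⟩).re + η.re < (γ ⟨blockIdx k r s, h1⟩).re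

/-- `γ ∈ Γ^k_{M,N;τ}`. -/
def GamTau (τ η : ℂ) {N M : ℕ} (ℓ : Fin N → ℂ) (k : Fin M → Fin N) (γ : Fin M → ℂ) : Prop :=
  Gam η ℓ k γ ∧
    (∀ i, -(ℓ (k i) * η + τ).re < (γ i).re ∧ (γ i).re < (ℓ (k i) * η + τ).re) ∧
    ∀ r : Fin N, ∀ s : ℕ, s + 1 < nk k r →
      ∀ (h1 : blockIdx k r s < M) (h2 : blockIdx k r (s + 1) < M),
        (γ ⟨blockIdx k r (s + 1), h2⟩).re + (η - τ).re < (γ ⟨blockIdx k r s, h1⟩).re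

/-- `Λ₊ = max_s Re(ℓ_s η)`. -/
def Lam (η : ℂ) {N : ℕ} (ℓ : Fin N → ℂ) : ℝ := ⨆ s, (ℓ s * η).re

/-- the sector `Ã`. -/
def Atil (τ η ξp ξm : ℂ) {N : ℕ} (ℓ : Fin N → ℂ) : Set (Fin N → ℂ) :=
  {t | (∀ i j : Fin N, (j : ℕ) = (i : ℕ) + 1 → (t i - t j).re > 2 * Lam η ℓ + max η.re 0) ∧
       ∀ i : Fin N, (i : ℕ) = N - 1 →
         (t i).re > Lam η ℓ + max (max (η / 2).re 0) (max (-xiP τ η ξp).re (-xiM η ξm).re)}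

/-- the sector `Ã_τ`. -/
def AtilTau (τ η ξp ξm : ℂ) {N : ℕ} (ℓ : Fin N → ℂ) : Set (Fin N → ℂ) :=
  {t | (∀ i j : Fin N, (j : ℕ) = (i : ℕ) + 1 →
          (t i - t j).re > 2 * Lam η ℓ + max η.re 0 - τ.re) ∧
       ∀ i : Fin N, (i : ℕ) = N - 1 →
         (t i).re > Lam η ℓ + max (max (η / 2).re 0) (max (-xiP τ η ξp).re (-xiM η ξm).re) - τ.re}

/-- the cone `Q₊ ⊂ ℤ^N` spanned by the simple roots `e_i - e_{i+1}` and `e_N`. -/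
def Qplus {N : ℕ} : Set (Fin N → ℤ) :=
  {α | ∃ β : Fin N → ℕ, ∀ j : Fin N,
    α j = (β j : ℤ) -
      if _h : 0 < (j : ℕ) then
        (β ⟨(j : ℕ) - 1, lt_of_le_of_lt (Nat.sub_le _ _) j.isLt⟩ : ℤ)
      else 0}

/-- the cube `[0,π]^M` over which the contour integrals are iterated. -/
def box (M : ℕ) : Set (Fin M → ℝ) := Set.univ.pi fun _ => Set.Icc (0 : ℝ) Real.pi

/-- the point of the contour `C^γ_k(t)` with parameters `s ∈ [0,π]^M`. -/
def cpt {M N : ℕ} (k : Fin M → Fin N) (γ : Fin M → ℂ) (t : Fin N → ℂ) (s : Fin M → ℝ) :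
    Fin M → ℂ := fun i => t (k i) + γ i + (s i : ℂ) * I

/-- the iterated contour integral over `C^γ_k(t)`. -/
def contourIntegral {M N : ℕ} (k : Fin M → Fin N) (γ : Fin M → ℂ) (t : Fin N → ℂ)
    (f : (Fin M → ℂ) → ℂ) : ℂ :=
  I ^ M * ∫ s in box M, f (cpt k γ t s)

/-- nonvanishing of all denominators occurring in `w_k(x;t)/Φ_k(t)`. -/
def w0DenomOK (τ η ξp ξm : ℂ) {N M : ℕ} (ℓ : Fin N → ℂ) (k : Fin M → Fin N) (x : Fin M → ℂ)
    (t : Fin N → ℂ) : Prop :=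
  (∀ s : Fin N, ∀ i : Fin M,
      poch (qsq τ) (exp (-2 * (t s + x i + ℓ s * η))) ≠ 0 ∧
      poch (qsq τ) (exp (-2 * (t s - x i + ℓ s * η))) ≠ 0) ∧
  (∀ i : Fin M,
      poch (qsq τ) (exp (2 * (-xiP τ η ξp - x i))) ≠ 0 ∧
      poch (qsq τ) (exp (2 * (-xiM η ξm - x i))) ≠ 0) ∧
  (∀ i : Fin M, ∀ s : Fin N, k i ≤ s → theta (qsq τ) (exp (2 * (x i - t s + ℓ s * η))) ≠ 0) ∧
  ∀ i j : Fin M, i < j →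
      poch (qsq τ) (exp (-2 * (x i + x j - η))) ≠ 0 ∧
      poch (qsq τ) (exp (-2 * (x i - x j - η))) ≠ 0

/-- nonvanishing of the theta denominators of `Φ_k(t)`. -/
def PhiDenomOK (τ η ξp ξm : ℂ) {N M : ℕ} (ℓ : Fin N → ℂ) (k : Fin M → Fin N)
    (t : Fin N → ℂ) : Prop :=
  ∀ r, theta (qsq τ) (phiC η ξp ξm ℓ k r * exp (2 * t r)) ≠ 0

/-- nonvanishing of all sinh denominators occurring in `β_m(x;t)` (for any rearrangement `m`). -/
def betaDenomOK (η : ℂ) {N M : ℕ} (ℓ : Fin N → ℂ) (x : Fin M → ℂ) (t : Fin N → ℂ) : Prop :=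
  (∀ s : Fin N, ∀ i : Fin M,
      sinh (t s + x i - ℓ s * η) ≠ 0 ∧ sinh (t s - x i - ℓ s * η) ≠ 0) ∧
  ∀ i j : Fin M, i < j → sinh (x i + x j) ≠ 0 ∧ sinh (x i - x j) ≠ 0

/-!
The product `Δ(x;t) = ∏_{i,s} sinh(t_s + x_i - ℓ_s η) sinh(t_s - x_i - ℓ_s η) ·
∏_{i<j} sinh(x_i + x_j) sinh(x_i - x_j)` is even in each `x_i`, so it is a common denominator of
all the summands of every `β_m`, and `β_m Δ` is entire in `x_j`. Each factor of `Δ` divides a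
numerator of `w_k`: `sinh(t_s ± x_i - ℓ_s η)` divides `F(x_i;t)`, and `sinh(x_i ± x_j)` divides
`h(x_i ± x_j)`. In `(w_k/Δ)(β_m Δ)` the poles of `β_m` are therefore gone, except that for
`s ≥ k_i` the factor `(e^{-2(t_s - x_i - ℓ_s η)};q²)_∞` of `F` is already used up by the
denominator of `u_{k;i}`; the remaining poles lie on half-lattices attached to `P⁺` and `P⁻`.
-/

lemma norm_qsq_lt_one {τ : ℂ} (hτ : τ.re < 0) : ‖qsq τ‖ < 1 := by
  rw [qsq, norm_exp, Real.exp_lt_one_iff, mul_re, re_ofNat, im_ofNat]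
  linarith

section Pochhammer

variable {p : ℂ}

lemma summable_norm_neg_mul_pow (hp : ‖p‖ < 1) (z : ℂ) :
    Summable fun m : ℕ => ‖-(z * p ^ m)‖ := by
  simpa only [norm_neg, norm_mul, norm_pow] using
    (summable_geometric_of_lt_one (norm_nonneg p) hp).mul_left ‖z‖

lemma poch_eq_zero_iff (hp : ‖p‖ < 1) {z : ℂ} : poch p z = 0 ↔ ∃ m : ℕ, z * p ^ m = 1 := by
  constructor
  · contrapose!
    intro h
    simp only [poch, sub_eq_add_neg]
    refine tprod_one_add_ne_zero_of_summable (f := fun m : ℕ => -(z * p ^ m)) (fun m => ?_)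
      (summable_norm_neg_mul_pow hp z)
    rw [← sub_eq_add_neg, sub_ne_zero]
    exact (h m).symm
  · rintro ⟨m, hm⟩
    exact tprod_of_exists_eq_zero ⟨m, by rw [hm, sub_self]⟩

lemma poch_eq_one_sub_mul_poch (hp : ‖p‖ < 1) (z : ℂ) :
    poch p z = (1 - z) * poch p (p * z) := by
  have shift (m : ℕ) : 1 - p * z * p ^ m = 1 - z * p ^ (m + 1) := by ring
  have tail : Multipliable fun m : ℕ => 1 - p * z * p ^ m := by
    simp only [sub_eq_add_neg]
    exact multipliable_one_add_of_summable (summable_norm_neg_mul_pow hp (p * z))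
  simp only [poch, shift] at tail ⊢
  rw [tprod_eq_zero_mul' (f := fun m : ℕ => 1 - z * p ^ m) tail, pow_zero, mul_one]

lemma differentiable_poch (hp : ‖p‖ < 1) : Differentiable ℂ (poch p) := by
  have h : HasProdLocallyUniformlyOn (fun (m : ℕ) (z : ℂ) => 1 - z * p ^ m) (poch p) Set.univ := by
    refine hasProdLocallyUniformlyOn_of_forall_compact isOpen_univ fun K _ hK => ?_
    obtain ⟨R, hR⟩ := hK.isBounded.exists_norm_le
    unfold poch
    simp only [sub_eq_add_neg]
    refine ((summable_geometric_of_lt_one (norm_nonneg p) hp).mul_left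
      R).hasProdUniformlyOn_nat_one_add hK (.of_forall fun m z hz => ?_) fun _ => by fun_prop
    rw [norm_neg, norm_mul, norm_pow]
    gcongr
    exact hR z hz
  rw [← differentiableOn_univ]
  exact h.differentiableOn (.of_forall fun s => by fun_prop) isOpen_univ

end Pochhammer

/-- The half-lattice `τ ℤ_{≥0} + π√−1 ℤ`, along which every pole of the weight function repeats. -/
def halfLattice (τ : ℂ) : Set ℂ := {a | ∃ n : ℕ, ∃ m : ℤ, a = n * τ + m * (Real.pi * I)}

/-- The `q²`-factorial in the additive variable, `(e^{−2a}; q²)_∞`: an entire function of `a` whose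
zero set is `halfLattice τ`. -/
def pochExp (τ a : ℂ) : ℂ := poch (qsq τ) (exp (-2 * a))

section PochExp

variable {τ : ℂ}

lemma differentiable_pochExp (hτ : τ.re < 0) : Differentiable ℂ (pochExp τ) :=
  (differentiable_poch (norm_qsq_lt_one hτ)).comp (by fun_prop)

lemma pochExp_eq_zero_iff (hτ : τ.re < 0) {a : ℂ} : pochExp τ a = 0 ↔ a ∈ halfLattice τ := by
  rw [pochExp, poch_eq_zero_iff (norm_qsq_lt_one hτ)]
  refine exists_congr fun n => ?_
  rw [qsq, ← exp_nat_mul, ← exp_add, exp_eq_one_iff]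
  refine (Equiv.neg ℤ).exists_congr fun m => ?_
  rw [Equiv.neg_apply, Int.cast_neg]
  constructor <;> intro h
  · linear_combination (-1 / 2 : ℂ) * h
  · linear_combination (-2 : ℂ) * h

lemma one_sub_exp_neg_two_mul (a : ℂ) : 1 - exp (-2 * a) = 2 * exp (-a) * sinh a := by
  have h : exp (-2 * a) = exp (-a) * exp (-a) := by rw [← exp_add]; ring_nf
  rw [h, sinh, exp_neg]
  field_simp

lemma qsq_mul_exp (τ a : ℂ) : qsq τ * exp (-2 * a) = exp (-2 * (a - τ)) := by
  rw [qsq, ← exp_add]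
  ring_nf

lemma pochExp_eq_sinh_mul (hτ : τ.re < 0) (a : ℂ) :
    pochExp τ a = 2 * exp (-a) * sinh a * pochExp τ (a - τ) := by
  rw [pochExp, poch_eq_one_sub_mul_poch (norm_qsq_lt_one hτ), one_sub_exp_neg_two_mul, qsq_mul_exp,
    pochExp]

lemma theta_exp (τ a : ℂ) :
    theta (qsq τ) (exp (2 * a)) = pochExp τ (-a) * pochExp τ (a - τ) := by
  rw [theta, ← exp_neg, pochExp, pochExp, ← qsq_mul_exp]
  ring_nf

lemma pochExp_ne_zero (hτ : τ.re < 0) {a : ℂ} (ha : a ∉ halfLattice τ) : pochExp τ a ≠ 0 :=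
  (pochExp_eq_zero_iff hτ).not.mpr ha

lemma sinh_ne_zero_of_notMem_halfLattice (hτ : τ.re < 0) {a : ℂ} (ha : a ∉ halfLattice τ) :
    sinh a ≠ 0 := by
  intro h
  apply pochExp_ne_zero hτ ha
  rw [pochExp_eq_sinh_mul hτ, h, mul_zero, zero_mul]

lemma pochExp_sub_ne_zero (hτ : τ.re < 0) {a : ℂ} (ha : a ∉ halfLattice τ) :
    pochExp τ (a - τ) ≠ 0 := by
  intro h
  apply pochExp_ne_zero hτ ha
  rw [pochExp_eq_sinh_mul hτ, h, mul_zero]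

end PochExp

/-- The common denominator `Δ(x;t)` of all the summands of all the `β_m(x;t)`. -/
def commonDenom (η : ℂ) {M N : ℕ} (ℓ : Fin N → ℂ) (x : Fin M → ℂ) (t : Fin N → ℂ) : ℂ :=
  (∏ i, ∏ s, sinh (t s + x i - ℓ s * η) * sinh (t s - x i - ℓ s * η)) *
    ∏ p : Fin M × Fin M with p.1 < p.2, sinh (x p.1 + x p.2) * sinh (x p.1 - x p.2)

lemma commonDenom_ne_zero_iff {η : ℂ} {M N : ℕ} {ℓ : Fin N → ℂ} {x : Fin M → ℂ} {t : Fin N → ℂ} :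
    commonDenom η ℓ x t ≠ 0 ↔ betaDenomOK η ℓ x t := by
  simp only [commonDenom, betaDenomOK, mul_ne_zero_iff, Finset.prod_ne_zero_iff, Finset.mem_univ,
    forall_true_left, Finset.mem_filter, true_and, Prod.forall]
  rw [forall_comm]

lemma commonDenom_sign_mul (η : ℂ) {M N : ℕ} (ℓ : Fin N → ℂ) (ε : Fin M → Bool) (x : Fin M → ℂ)
    (t : Fin N → ℂ) : commonDenom η ℓ (sg ε * x) t = commonDenom η ℓ x t := by
  unfold commonDenom sg
  congr 1
  · refine Finset.prod_congr rfl fun i _ => Finset.prod_congr rfl fun s _ => ?_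
    cases h : ε i
    · simp [h, mul_comm, sub_eq_add_neg]
    · simp [h]
  · refine Finset.prod_congr rfl fun p _ => ?_
    cases h₁ : ε p.1 <;> cases h₂ : ε p.2 <;>
      simp [h₁, h₂, sinh_add, sinh_sub] <;> ring

section Weight

variable {τ η ξp ξm : ℂ} {M N : ℕ} {ℓ : Fin N → ℂ} {t : Fin N → ℂ}

lemma gfun_eq (τ η ξp ξm z : ℂ) :
    gfun τ η ξp ξm z = pochExp τ (z - xiP τ η ξp - τ) * pochExp τ (z - xiM η ξm - τ) /
      (pochExp τ (z + xiP τ η ξp) * pochExp τ (z + xiM η ξm)) := by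
  simp only [gfun, pochExp, ← qsq_mul_exp τ]
  ring_nf

lemma differentiableAt_gfun (hτ : τ.re < 0) {z : ℂ} (hp : z + xiP τ η ξp ∉ halfLattice τ)
    (hm : z + xiM η ξm ∉ halfLattice τ) : DifferentiableAt ℂ (gfun τ η ξp ξm) z := by
  have hP := differentiable_pochExp hτ
  simp only [funext (gfun_eq τ η ξp ξm)]
  exact .div (by fun_prop) (by fun_prop)
    (mul_ne_zero (pochExp_ne_zero hτ hp) (pochExp_ne_zero hτ hm))

/-- The quotient `h(b) / sinh b`, with the removable singularities at the zeros of `sinh b`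
filled in. -/
def hQuot (τ η b : ℂ) : ℂ := 2 * exp (-b) * pochExp τ (b + η - τ) / pochExp τ (b - η)

lemma hfun_eq_hQuot_mul (τ η b : ℂ) : hfun τ η b = hQuot τ η b * sinh b := by
  rw [hfun, one_sub_exp_neg_two_mul, qsq_mul_exp, hQuot, pochExp, pochExp]
  ring

lemma differentiableAt_hQuot (hτ : τ.re < 0) {b : ℂ} (hb : b - η ∉ halfLattice τ) :
    DifferentiableAt ℂ (hQuot τ η) b := by
  have hP := differentiable_pochExp hτ
  exact .div (by fun_prop) (by fun_prop) (pochExp_ne_zero hτ hb)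

/-- The factor at site `s` of `F(z;t) u_{k;i}(z;t)`, where `r = k_i`, divided by
`sinh(t_s + z - ℓ_s η) sinh(t_s - z - ℓ_s η)`, with removable singularities filled in. -/
def siteQuot (τ η : ℂ) {N : ℕ} (ℓ t : Fin N → ℂ) (r s : Fin N) (z : ℂ) : ℂ :=
  2 * exp (-(t s + z - ℓ s * η)) * pochExp τ (t s + z - ℓ s * η - τ) /
      pochExp τ (t s + z + ℓ s * η) *
    (if r < s then pochExp τ (z - t s - ℓ s * η - τ) else (pochExp τ (t s - z + ℓ s * η))⁻¹) *
    (if r ≤ s then (sinh (t s - z - ℓ s * η) * pochExp τ (z - t s + ℓ s * η - τ))⁻¹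
      else 2 * exp (-(t s - z - ℓ s * η)) * pochExp τ (t s - z - ℓ s * η - τ))

lemma siteQuot_mul_sinh (hτ : τ.re < 0) {r s : Fin N} {z : ℂ}
    (hF : pochExp τ (t s - z + ℓ s * η) ≠ 0)
    (hu : r ≤ s → theta (qsq τ) (exp (2 * (z - t s + ℓ s * η))) ≠ 0)
    (hβ : sinh (t s - z - ℓ s * η) ≠ 0) :
    siteQuot τ η ℓ t r s z * (sinh (t s + z - ℓ s * η) * sinh (t s - z - ℓ s * η)) =
      pochExp τ (t s + z - ℓ s * η) * pochExp τ (t s - z - ℓ s * η) /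
          (pochExp τ (t s + z + ℓ s * η) * pochExp τ (t s - z + ℓ s * η)) *
        (if r < s then theta (qsq τ) (exp (2 * (z - t s - ℓ s * η))) else 1) /
        (if r ≤ s then theta (qsq τ) (exp (2 * (z - t s + ℓ s * η))) else 1) := by
  have neg₁ : -(z - t s - ℓ s * η) = t s - z + ℓ s * η := by ring
  have neg₂ : -(z - t s + ℓ s * η) = t s - z - ℓ s * η := by ring
  simp only [theta_exp, neg₁, neg₂, mul_ne_zero_iff] at hu ⊢
  rw [siteQuot, pochExp_eq_sinh_mul hτ (t s + z - ℓ s * η)]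
  rcases lt_trichotomy r s with h | rfl | h
  · obtain ⟨hu₁, -⟩ := hu h.le
    simp only [if_pos h, if_pos h.le]
    field_simp
  · obtain ⟨hu₁, -⟩ := hu le_rfl
    simp only [lt_irrefl, if_false, le_refl, if_true]
    field_simp
  · simp only [if_neg h.not_gt, if_neg h.not_ge]
    rw [pochExp_eq_sinh_mul hτ (t s - z - ℓ s * η)]
    field_simp

lemma differentiableAt_siteQuot (hτ : τ.re < 0) {r s : Fin N} {z : ℂ}
    (hneg : z - (-t s - ℓ s * η) ∉ halfLattice τ)
    (hle : s ≤ r → t s + ℓ s * η - z ∉ halfLattice τ)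
    (hge : r ≤ s → z - (t s - ℓ s * η) ∉ halfLattice τ) :
    DifferentiableAt ℂ (siteQuot τ η ℓ t r s) z := by
  have hP := differentiable_pochExp hτ
  refine .mul (.mul (.div (by fun_prop) (by fun_prop) (pochExp_ne_zero hτ ?_)) ?_) ?_
  · convert hneg using 2
    ring
  · split_ifs with h
    · fun_prop
    · refine .fun_inv (by fun_prop) (pochExp_ne_zero hτ ?_)
      convert hle (not_lt.mp h) using 2
      ring
  · split_ifs with h
    · refine .fun_inv (by fun_prop) (mul_ne_zero ?_ ?_)
      · rw [← neg_ne_zero, ← sinh_neg]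
        convert sinh_ne_zero_of_notMem_halfLattice hτ (hge h) using 2
        ring
      · convert pochExp_sub_ne_zero hτ (hge h) using 2
        ring
    · fun_prop

/-- The quotient `w_k(x;t) / (Φ_k(t) Δ(x;t))`, with removable singularities filled in. -/
def w0Quot (τ η ξp ξm : ℂ) {M N : ℕ} (ℓ : Fin N → ℂ) (k : Fin M → Fin N) (x : Fin M → ℂ)
    (t : Fin N → ℂ) : ℂ :=
  (∏ i, gfun τ η ξp ξm (x i) *
      (exp (-t (k i)) * theta (qsq τ) (exp (2 * (x i - t (k i) + psiC τ η ξp ξm ℓ k i)))) *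
      ∏ s, siteQuot τ η ℓ t (k i) s (x i)) *
    ∏ p : Fin M × Fin M with p.1 < p.2,
      hQuot τ η (x p.1 + x p.2) * hQuot τ η (x p.1 - x p.2)

lemma w0_eq_w0Quot_mul_commonDenom (hτ : τ.re < 0) {k : Fin M → Fin N} {x : Fin M → ℂ}
    (hw : w0DenomOK τ η ξp ξm ℓ k x t) (hβ : betaDenomOK η ℓ x t) :
    w0 τ η ξp ξm ℓ k x t = w0Quot τ η ξp ξm ℓ k x t * commonDenom η ℓ x t := by
  obtain ⟨hF, -, hu, -⟩ := hw
  rw [w0, w0Quot, commonDenom, mul_mul_mul_comm, ← Finset.prod_mul_distrib,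
    ← Finset.prod_mul_distrib]
  congr 1
  · refine Finset.prod_congr rfl fun i _ => ?_
    rw [mul_assoc _ (∏ s, _) (∏ s, _), ← Finset.prod_mul_distrib,
      Finset.prod_congr rfl fun s _ => siteQuot_mul_sinh hτ (hF s i).2 (hu i s) (hβ.1 s i).2]
    simp only [Ffun, ufun, pochExp, Finset.prod_filter, Finset.prod_div_distrib,
      Finset.prod_mul_distrib]
    ring
  · refine Finset.prod_congr rfl fun p _ => ?_
    rw [hfun_eq_hQuot_mul, hfun_eq_hQuot_mul]
    ring

end Weight

section BoundaryCoefficients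

variable {η ξm : ℂ} {M N : ℕ} {ℓ : Fin N → ℂ} {t : Fin N → ℂ}

/-- The summand of `β_k(x;t)` attached to a rearrangement `m` and signs `ε`, without the sign
`∏ i, ε_i`, as a function of `y_i = ε_i x_i`. -/
def betaTerm (η ξm : ℂ) {M N : ℕ} (ℓ : Fin N → ℂ) (m : Fin M → Fin N) (y : Fin M → ℂ)
    (t : Fin N → ℂ) : ℂ :=
  (∏ i, sinh (y i - xiM η ξm) / sinh (t (m i) + y i - ℓ (m i) * η) *
      (∏ s with m i < s, sinh (t s + y i + ℓ s * η) / sinh (t s + y i - ℓ s * η)) *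
      ∏ s, sinh (t s - y i + ℓ s * η) / sinh (t s - y i - ℓ s * η)) *
    (∏ p : Fin M × Fin M with p.1 < p.2, sinh (y p.1 + y p.2 + η) / sinh (y p.1 + y p.2)) *
    ∏ p : Fin M × Fin M with m p.1 < m p.2, sinh (y p.1 - y p.2 - η) / sinh (y p.1 - y p.2)

lemma betaF_eq_sum_betaTerm (k : Fin M → Fin N) (x : Fin M → ℂ) :
    betaF η ξm ℓ k x t = exp ((∑ i, ((nk k (k i) : ℂ) / 2 - ℓ (k i))) * η) *
      ∑ m ∈ rearr k, ∑ ε : Fin M → Bool, (∏ i, sg ε i) * betaTerm η ξm ℓ m (sg ε * x) t := by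
  simp only [betaF, betaTerm, Pi.mul_apply, mul_div_assoc, mul_assoc, Finset.prod_mul_distrib]

/-- The factor at site `s` of the numerator of `betaTerm`, where `r = m_i` and `z = y_i`. -/
def betaSiteNum (η : ℂ) {N : ℕ} (ℓ t : Fin N → ℂ) (r s : Fin N) (z : ℂ) : ℂ :=
  sinh (t s - z + ℓ s * η) * (if r < s then sinh (t s + z + ℓ s * η) else 1) *
    (if r ≤ s then 1 else sinh (t s + z - ℓ s * η))

lemma prod_betaSiteNum {r : Fin N} {z : ℂ}
    (h : ∀ s, sinh (t s + z - ℓ s * η) ≠ 0 ∧ sinh (t s - z - ℓ s * η) ≠ 0) :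
    (sinh (t r + z - ℓ r * η))⁻¹ *
          (∏ s with r < s, sinh (t s + z + ℓ s * η) / sinh (t s + z - ℓ s * η)) *
        (∏ s, sinh (t s - z + ℓ s * η) / sinh (t s - z - ℓ s * η)) *
        (∏ s, sinh (t s + z - ℓ s * η) * sinh (t s - z - ℓ s * η)) =
      ∏ s, betaSiteNum η ℓ t r s z := by
  have merge : (sinh (t r + z - ℓ r * η))⁻¹ * (∏ s with r < s, (sinh (t s + z - ℓ s * η))⁻¹) =
      ∏ s with r ≤ s, (sinh (t s + z - ℓ s * η))⁻¹ := by
    rw [Finset.filter_lt_eq_Ioi, Finset.filter_le_eq_Ici]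
    exact Finset.mul_prod_Ioi_eq_prod_Ici (f := fun s => (sinh (t s + z - ℓ s * η))⁻¹) r
  calc
    _ = ∏ s, (if r ≤ s then (sinh (t s + z - ℓ s * η))⁻¹ else 1) *
          (if r < s then sinh (t s + z + ℓ s * η) else 1) *
          (sinh (t s - z + ℓ s * η) / sinh (t s - z - ℓ s * η)) *
          (sinh (t s + z - ℓ s * η) * sinh (t s - z - ℓ s * η)) := by
      simp only [Finset.prod_mul_distrib, ← Finset.prod_filter, ← merge, div_eq_mul_inv]
      ring
    _ = _ := Finset.prod_congr rfl fun s _ => by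
      obtain ⟨h₁, h₂⟩ := h s
      rw [betaSiteNum]
      split_ifs with h₃ h₄ h₄
      · field_simp
      · field_simp
      · exact absurd h₄.le h₃
      · field_simp

/-- The numerator of the factors of `betaTerm` with denominator `± sinh d`, where `d = y_i - y_j`,
`a = m_i` and `b = m_j`. -/
def exchangeNum (η : ℂ) {N : ℕ} (a b : Fin N) (d : ℂ) : ℂ :=
  if a < b then sinh (d - η) else if b < a then sinh (d + η) else sinh d

lemma exchangeNum_eq_mul_sinh (a b : Fin N) {c d : ℂ} (hcd : sinh (c - d) ≠ 0) :
    (if a < b then sinh (c - d - η) / sinh (c - d) else 1) *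
          (if b < a then sinh (d - c - η) / sinh (d - c) else 1) * sinh (c - d) =
      exchangeNum η a b (c - d) := by
  rw [exchangeNum]
  rcases lt_trichotomy a b with h | rfl | h
  · simp [h, h.not_gt, hcd]
  · simp
  · have h₁ : sinh (d - c) = -sinh (c - d) := by rw [← sinh_neg, neg_sub]
    have h₂ : sinh (d - c - η) = -sinh (c - d + η) := by rw [← sinh_neg]; ring_nf
    simp [h, h.not_gt, h₁, h₂, hcd]

lemma prod_filter_lt_comp {ι κ A : Type*} [LinearOrder ι] [Fintype ι] [LinearOrder κ]
    [CommMonoid A] (m : ι → κ) (f : ι × ι → A) :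
    ∏ p : ι × ι with m p.1 < m p.2, f p = ∏ p : ι × ι with p.1 < p.2,
      (if m p.1 < m p.2 then f p else 1) * (if m p.2 < m p.1 then f p.swap else 1) := by
  have split (p : ι × ι) : (if m p.1 < m p.2 then f p else 1) =
      (if p.1 < p.2 then if m p.1 < m p.2 then f p else 1 else 1) *
        (if p.2 < p.1 then if m p.1 < m p.2 then f p else 1 else 1) := by
    rcases lt_trichotomy p.1 p.2 with h | h | h
    · simp [h, h.not_gt]
    · simp [h]
    · simp [h, h.not_gt]
  rw [Finset.prod_filter, Finset.prod_congr rfl fun p _ => split p, Finset.prod_mul_distrib,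
    Finset.prod_mul_distrib, Finset.prod_filter, Finset.prod_filter]
  exact congrArg _ ((Equiv.prodComm ι ι).prod_comp _).symm

/-- The numerator of `betaTerm` over the denominator `commonDenom`. -/
def betaTermNum (η ξm : ℂ) {M N : ℕ} (ℓ : Fin N → ℂ) (m : Fin M → Fin N) (y : Fin M → ℂ)
    (t : Fin N → ℂ) : ℂ :=
  (∏ i, sinh (y i - xiM η ξm) * ∏ s, betaSiteNum η ℓ t (m i) s (y i)) *
    ∏ p : Fin M × Fin M with p.1 < p.2,
      sinh (y p.1 + y p.2 + η) * exchangeNum η (m p.1) (m p.2) (y p.1 - y p.2)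

lemma betaTerm_mul_commonDenom {y : Fin M → ℂ} (hy : betaDenomOK η ℓ y t) (m : Fin M → Fin N) :
    betaTerm η ξm ℓ m y t * commonDenom η ℓ y t = betaTermNum η ξm ℓ m y t := by
  rw [betaTerm, commonDenom, betaTermNum, prod_filter_lt_comp, mul_assoc (∏ i, _),
    mul_mul_mul_comm, ← Finset.prod_mul_distrib, ← Finset.prod_mul_distrib,
    ← Finset.prod_mul_distrib]
  congr 1
  · refine Finset.prod_congr rfl fun i _ => ?_
    rw [← prod_betaSiteNum fun s => hy.1 s i]
    ring
  · refine Finset.prod_congr rfl fun p hp => ?_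
    obtain ⟨hadd, hsub⟩ := hy.2 p.1 p.2 (Finset.mem_filter.mp hp).2
    rw [← exchangeNum_eq_mul_sinh _ _ hsub, Prod.fst_swap, Prod.snd_swap]
    field_simp

/-- The numerator of `β_k(x;t)` over the denominator `commonDenom`. -/
def betaNum (η ξm : ℂ) {M N : ℕ} (ℓ : Fin N → ℂ) (k : Fin M → Fin N) (x : Fin M → ℂ)
    (t : Fin N → ℂ) : ℂ :=
  exp ((∑ i, ((nk k (k i) : ℂ) / 2 - ℓ (k i))) * η) *
    ∑ m ∈ rearr k, ∑ ε : Fin M → Bool, (∏ i, sg ε i) * betaTermNum η ξm ℓ m (sg ε * x) t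

lemma commonDenom_mul_betaF {x : Fin M → ℂ} (hx : betaDenomOK η ℓ x t) (k : Fin M → Fin N) :
    commonDenom η ℓ x t * betaF η ξm ℓ k x t = betaNum η ξm ℓ k x t := by
  have hε (ε : Fin M → Bool) : betaDenomOK η ℓ (sg ε * x) t := by
    rwa [← commonDenom_ne_zero_iff, commonDenom_sign_mul, commonDenom_ne_zero_iff]
  simp only [betaF_eq_sum_betaTerm, betaNum, ← betaTerm_mul_commonDenom (hε _),
    commonDenom_sign_mul, ← mul_assoc, ← Finset.sum_mul]
  ring

lemma differentiable_betaTermNum (m : Fin M → Fin N) {Y : ℂ → Fin M → ℂ}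
    (hY : Differentiable ℂ Y) : Differentiable ℂ fun z => betaTermNum η ξm ℓ m (Y z) t := by
  unfold betaTermNum betaSiteNum exchangeNum
  refine .mul (.fun_finsetProd fun i _ => .mul (by fun_prop) (.fun_finsetProd fun s _ => ?_))
    (.fun_finsetProd fun p _ => .mul (by fun_prop) ?_)
  · split_ifs <;> fun_prop
  · split_ifs <;> fun_prop

lemma differentiable_betaNum (k : Fin M → Fin N) {X : ℂ → Fin M → ℂ} (hX : Differentiable ℂ X) :
    Differentiable ℂ fun z => betaNum η ξm ℓ k (X z) t := by
  unfold betaNum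
  refine .const_mul (.fun_sum fun m _ => .fun_sum fun ε _ => .const_mul ?_ _) _
  exact differentiable_betaTermNum m (hX.const_mul (sg ε))

end BoundaryCoefficients

section PoleSet

/-- `P⁺` for the variable `x_j`. -/
def polesPlus (η : ℂ) {M N : ℕ} (ℓ : Fin N → ℂ) (k : Fin M → Fin N) (j : Fin M) (x : Fin M → ℂ)
    (t : Fin N → ℂ) : Set ℂ :=
  {w | (∃ s, s ≤ k j ∧ w = t s + ℓ s * η) ∨ ∃ i, i < j ∧ w = x i - η}

/-- `P⁻` for the variable `x_j`. -/
def polesMinus (τ η ξp ξm : ℂ) {M N : ℕ} (ℓ : Fin N → ℂ) (k : Fin M → Fin N) (j : Fin M)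
    (x : Fin M → ℂ) (t : Fin N → ℂ) : Set ℂ :=
  {w | (∃ s, k j ≤ s ∧ w = t s - ℓ s * η) ∨ (∃ s, w = -t s - ℓ s * η) ∨
    w = -xiP τ η ξp ∨ w = -xiM η ξm ∨ (∃ i, j < i ∧ w = x i + η) ∨ ∃ i, i ≠ j ∧ w = -x i + η}

/-- The set `S = ((P⁺ − τ ℤ_{≥0}) ∪ (P⁻ + τ ℤ_{≥0})) + π√−1 ℤ` for the variable `x_j`. -/
def poleSet (τ η ξp ξm : ℂ) {M N : ℕ} (ℓ : Fin N → ℂ) (k : Fin M → Fin N) (j : Fin M)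
    (x : Fin M → ℂ) (t : Fin N → ℂ) : Set ℂ :=
  {z | (∃ w, w ∈ polesPlus η ℓ k j x t ∧
        ∃ n : ℕ, ∃ m : ℤ, z = w - n * τ + m * (Real.pi * I)) ∨
      ∃ w, w ∈ polesMinus τ η ξp ξm ℓ k j x t ∧
        ∃ n : ℕ, ∃ m : ℤ, z = w + n * τ + m * (Real.pi * I)}

variable {τ η ξp ξm : ℂ} {M N : ℕ} {ℓ : Fin N → ℂ} {k : Fin M → Fin N} {j : Fin M}
  {x : Fin M → ℂ} {t : Fin N → ℂ} {z w : ℂ}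

lemma sub_notMem_halfLattice_of_mem_polesPlus (hz : z ∉ poleSet τ η ξp ξm ℓ k j x t)
    (hw : w ∈ polesPlus η ℓ k j x t) : w - z ∉ halfLattice τ := by
  rintro ⟨n, m, h⟩
  refine hz (.inl ⟨w, hw, n, -m, ?_⟩)
  rw [Int.cast_neg]
  linear_combination -h

lemma sub_notMem_halfLattice_of_mem_polesMinus (hz : z ∉ poleSet τ η ξp ξm ℓ k j x t)
    (hw : w ∈ polesMinus τ η ξp ξm ℓ k j x t) : z - w ∉ halfLattice τ := by
  rintro ⟨n, m, h⟩
  exact hz (.inr ⟨w, hw, n, m, by linear_combination h⟩)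

lemma differentiableAt_siteFactors (hτ : τ.re < 0) (hz : z ∉ poleSet τ η ξp ξm ℓ k j x t) :
    DifferentiableAt ℂ (fun y => gfun τ η ξp ξm y *
      (exp (-t (k j)) * theta (qsq τ) (exp (2 * (y - t (k j) + psiC τ η ξp ξm ℓ k j)))) *
      ∏ s, siteQuot τ η ℓ t (k j) s y) z := by
  have hP := differentiable_pochExp hτ
  have minus {w} := sub_notMem_halfLattice_of_mem_polesMinus (w := w) hz
  refine .mul (.mul (differentiableAt_gfun hτ ?_ ?_) ?_) (.fun_finsetProd fun s _ =>
    differentiableAt_siteQuot hτ ?_ (fun hs => ?_) fun hs => ?_)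
  · rw [← sub_neg_eq_add]
    exact minus (.inr (.inr (.inl rfl)))
  · rw [← sub_neg_eq_add]
    exact minus (.inr (.inr (.inr (.inl rfl))))
  · simp only [theta_exp]
    fun_prop
  · exact minus (.inr (.inl ⟨s, rfl⟩))
  · exact sub_notMem_halfLattice_of_mem_polesPlus hz (.inl ⟨s, hs, rfl⟩)
  · exact minus (.inl ⟨s, hs, rfl⟩)

lemma differentiableAt_pairFactor_update (hτ : τ.re < 0) (hz : z ∉ poleSet τ η ξp ξm ℓ k j x t)
    {a b : Fin M} (hab : a < b) :
    DifferentiableAt ℂ (fun y => hQuot τ η (Function.update x j y a + Function.update x j y b) *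
      hQuot τ η (Function.update x j y a - Function.update x j y b)) z := by
  have hQ {f : ℂ → ℂ} {w : ℂ} (hf : DifferentiableAt ℂ f z) (hw : w ∉ halfLattice τ)
      (h : f z - η = w) : DifferentiableAt ℂ (fun y => hQuot τ η (f y)) z :=
    DifferentiableAt.fun_comp' z (differentiableAt_hQuot hτ (h ▸ hw)) hf
  have minus {w} := sub_notMem_halfLattice_of_mem_polesMinus (w := w) hz
  rcases eq_or_ne a j with rfl | ha
  · simp only [Function.update_self, Function.update_of_ne hab.ne']
    exact .mul
      (hQ (by fun_prop) (minus (.inr (.inr (.inr (.inr (.inr ⟨b, hab.ne', rfl⟩)))))) (by ring))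
      (hQ (by fun_prop) (minus (.inr (.inr (.inr (.inr (.inl ⟨b, hab, rfl⟩)))))) (by ring))
  rcases eq_or_ne b j with rfl | hb
  · simp only [Function.update_self, Function.update_of_ne ha]
    exact .mul
      (hQ (by fun_prop) (minus (.inr (.inr (.inr (.inr (.inr ⟨a, ha, rfl⟩)))))) (by ring))
      (hQ (by fun_prop) (sub_notMem_halfLattice_of_mem_polesPlus hz (.inr ⟨a, hab, rfl⟩))
        (by ring))
  · simp only [Function.update_of_ne ha, Function.update_of_ne hb]
    fun_prop

lemma differentiableAt_w0Quot_update (hτ : τ.re < 0) (hz : z ∉ poleSet τ η ξp ξm ℓ k j x t) :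
    DifferentiableAt ℂ (fun y => w0Quot τ η ξp ξm ℓ k (Function.update x j y) t) z := by
  unfold w0Quot
  refine .mul (.fun_finsetProd fun i _ => ?_) (.fun_finsetProd fun p hp =>
    differentiableAt_pairFactor_update hτ hz (Finset.mem_filter.mp hp).2)
  rcases eq_or_ne i j with rfl | hij
  · simpa only [Function.update_self] using differentiableAt_siteFactors hτ hz
  · simp only [Function.update_of_ne hij]
    fun_prop

end PoleSet

theorem stmt13_general {τ : ℂ} (hτ : τ.re < 0) (η ξp ξm : ℂ) {M N : ℕ} (ℓ : Fin N → ℂ)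
    (k m : Fin M → Fin N) (j : Fin M) (t : Fin N → ℂ) (x : Fin M → ℂ) :
    ∃ G : ℂ → ℂ, DifferentiableOn ℂ G (poleSet τ η ξp ξm ℓ k j x t)ᶜ ∧
      ∀ z ∉ poleSet τ η ξp ξm ℓ k j x t,
        w0DenomOK τ η ξp ξm ℓ k (Function.update x j z) t →
        PhiDenomOK τ η ξp ξm ℓ k t →
        betaDenomOK η ℓ (Function.update x j z) t →
        G z = wfun τ η ξp ξm ℓ k (Function.update x j z) t *
          betaF η ξm ℓ m (Function.update x j z) t := by
  have hupdate : Differentiable ℂ (Function.update x j) := fun z =>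
    (hasFDerivAt_update x z).differentiableAt
  refine ⟨fun z => PhiF τ η ξp ξm ℓ k t * w0Quot τ η ξp ξm ℓ k (Function.update x j z) t *
    betaNum η ξm ℓ m (Function.update x j z) t, fun z hz => ?_, fun z _ hw _ hβ => ?_⟩
  · exact (((differentiableAt_w0Quot_update hτ hz).const_mul _).mul
      (differentiable_betaNum m hupdate z)).differentiableWithinAt
  · simp only [wfun, w0_eq_w0Quot_mul_commonDenom hτ hw hβ, ← commonDenom_mul_betaF hβ]
    ring

/-- Lemma on pole location: for fixed `x_i` on the shifted segments
(`i ≠ j`), all poles of `x_j ↦ w_k(x;t)·β_m(x;t)` are contained in the set `S`;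
i.e. the function extends holomorphically to `ℂ ∖ S`. -/
theorem stmt13 (τ η ξp ξm : ℂ) (hτ : τ.re < 0) (M N : ℕ) (hN : 1 ≤ N)
    (ℓ : Fin N → ℂ) (k : Fin M → Fin N) (hk : Monotone k)
    (hD : Dmn η ℓ k) (γ : Fin M → ℂ) (hγ : Gam η ℓ k γ) (j : Fin M)
    (t : Fin N → ℂ) (x : Fin M → ℂ)
    (hx : ∀ i : Fin M, i ≠ j → ∃ s ∈ Set.Icc (0 : ℝ) Real.pi,
      x i = t (k i) + γ i + (s : ℂ) * I)
    (S : Set ℂ)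
    (hS : S = {z : ℂ |
      (∃ w : ℂ,
        ((∃ s : Fin N, s ≤ k j ∧ w = t s + ℓ s * η) ∨ (∃ i : Fin M, i < j ∧ w = x i - η)) ∧
        ∃ n : ℕ, ∃ mz : ℤ, z = w - (n : ℂ) * τ + (mz : ℂ) * ((Real.pi : ℂ) * I)) ∨
      (∃ w : ℂ,
        ((∃ s : Fin N, k j ≤ s ∧ w = t s - ℓ s * η) ∨ (∃ s : Fin N, w = -t s - ℓ s * η) ∨
          w = -xiP τ η ξp ∨ w = -xiM η ξm ∨
          (∃ i : Fin M, j < i ∧ w = x i + η) ∨ (∃ i : Fin M, i ≠ j ∧ w = -x i + η)) ∧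
        ∃ n : ℕ, ∃ mz : ℤ, z = w + (n : ℂ) * τ + (mz : ℂ) * ((Real.pi : ℂ) * I))}) :
    ∀ m : Fin M → Fin N, Monotone m →
      ∃ G : ℂ → ℂ, DifferentiableOn ℂ G Sᶜ ∧
        ∀ z : ℂ, z ∉ S →
          w0DenomOK τ η ξp ξm ℓ k (Function.update x j z) t →
          PhiDenomOK τ η ξp ξm ℓ k t →
          betaDenomOK η ℓ (Function.update x j z) t →
          G z = wfun τ η ξp ξm ℓ k (Function.update x j z) t *
              betaF η ξm ℓ m (Function.update x j z) t := by
  subst hS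
  exact fun m _ => stmt13_general hτ η ξp ξm ℓ k m j t x

end BQKZ
end
end

section
/- The explicit trigonometric weight functions a^ℓ_d satisfy the quantum affine sl₂-recursion: (i) a^∅_∅(∅;∅) = 1, and (ii) for all N ≥ 1, M ≥ 0, ℓ, t ∈ ℂ^N, d ∈ P_N(M) and x ∈ ℂ^M, at every point where all sinh factors appearing in denominators are nonzero, a^ℓ_d(x;t) = e^{d_N(d_N/2 − ℓ_N)η} ∑_{J ⊆ {1,…,M}, #Jᶜ = d_N} (∏_{i ∈ Jᶜ} −sinh(η)/sinh(t_N − x_i − (1/2 + ℓ_N)η)) · (∏_{i ∈ J} sinh(t_N − x_i − (1/2 − ℓ_N)η)/sinh(t_N − x_i − (1/2 + ℓ_N)η)) · (∏_{i ∈ J, j ∈ Jᶜ} sinh(x_i − x_j + η)/sinh(x_i − x_j)) · a^{ℓ̂}_{d̂}(x_J; t̂), where Jᶜ := {1,…,M} ∖ J, ẑ := (z₁,…,z_{N−1}) for z ∈ ℂ^N, and x_J denotes the subtuple of x indexed by the elements of J in increasing order. -/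
open Complex MeasureTheory

noncomputable section

namespace BQKZ

/-- the explicit trigonometric weight functions `a^ℓ_d(x;t)`. -/
def aW (η : ℂ) (N' M' : ℕ) (ℓ : Fin N' → ℂ) (d : Fin N' → ℕ) (x : Fin M' → ℂ)
    (t : Fin N' → ℂ) : ℂ :=
  ∑ m ∈ Finset.univ.filter fun m : Fin M' → Fin N' => ∀ s, nk m s = d s,
    (∏ i,
        -(exp (((nk m (m i) : ℂ) / 2 - ℓ (m i)) * η) * sinh η) /
            sinh (t (m i) - x i - (1 / 2 + ℓ (m i)) * η) *
          ∏ s ∈ Finset.univ.filter fun s : Fin N' => m i < s,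
            sinh (t s - x i - (1 / 2 - ℓ s) * η) / sinh (t s - x i - (1 / 2 + ℓ s) * η)) *
      ∏ p ∈ Finset.univ.filter fun p : Fin M' × Fin M' => m p.1 < m p.2,
        sinh (x p.1 - x p.2 + η) / sinh (x p.1 - x p.2)

/-!
Sort the maps `m : {1, …, M} → {1, …, N + 1}` by the set `J` of indices not sent to the last value:
`m` is then the same as a map from `J` to `{1, …, N}`, the occupation numbers at the first `N`
values are those of this map, and the last one is `#Jᶜ`. In the summand of `m`, an index in `Jᶜ`
has no larger value to meet, one in `J` meets the last value besides those met by the restricted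
map, and a pair with `m i < m j` either lies in `J × J` or is any pair in `J × Jᶜ`, so the summand
factors. The equal exponentials of the indices in `Jᶜ` multiply to the prefactor.
-/

section ExtendLast

open Finset

variable {ι κ R : Type*} {N : ℕ}

/-- The extension of `m : κ → Fin N` along an embedding `e : κ ↪ ι` to a map `ι → Fin (N + 1)`,
taking the new last value off the range of `e`. -/
def extendLast (e : κ ↪ ι) (m : κ → Fin N) : ι → Fin (N + 1) :=
  Function.extend e (fun a => (m a).castSucc) fun _ => Fin.last N

lemma extendLast_apply (e : κ ↪ ι) (m : κ → Fin N) (a : κ) :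
    extendLast e m (e a) = (m a).castSucc :=
  e.injective.extend_apply _ _ a

lemma extendLast_of_notMem_range {e : κ ↪ ι} (m : κ → Fin N) {i : ι} (hi : i ∉ Set.range e) :
    extendLast e m i = Fin.last N :=
  Function.extend_apply' _ _ i hi

lemma extendLast_ne_last_iff {e : κ ↪ ι} {m : κ → Fin N} {i : ι} :
    extendLast e m i ≠ Fin.last N ↔ i ∈ Set.range e := by
  refine ⟨not_imp_comm.1 (extendLast_of_notMem_range m), ?_⟩
  rintro ⟨a, rfl⟩
  exact (extendLast_apply e m a).trans_ne (Fin.castSucc_ne_last _)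

lemma extendLast_injective (e : κ ↪ ι) :
    Function.Injective (extendLast e : (κ → Fin N) → ι → Fin (N + 1)) := fun m m' h => by
  funext a
  simpa only [extendLast_apply, Fin.castSucc_inj] using congrFun h (e a)

lemma exists_extendLast_eq {e : κ ↪ ι} {m : ι → Fin (N + 1)}
    (hm : ∀ i, m i ≠ Fin.last N ↔ i ∈ Set.range e) : ∃ m', extendLast e m' = m := by
  refine ⟨fun a => (m (e a)).castPred ((hm _).2 ⟨a, rfl⟩), funext fun i => ?_⟩
  by_cases hi : i ∈ Set.range e
  · obtain ⟨a, rfl⟩ := hi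
    rw [extendLast_apply, Fin.castSucc_castPred]
  · rw [extendLast_of_notMem_range _ hi]
    exact (not_not.1 ((hm i).not.2 hi)).symm

lemma bijective_extendLast_orderEmbOfFin [LinearOrder ι] [Finite ι] :
    Function.Bijective fun p : (J : Finset ι) × (Fin #J → Fin N) =>
      extendLast (p.1.orderEmbOfFin rfl).toEmbedding p.2 := by
  have mem_range (J : Finset ι) (i : ι) :
      i ∈ Set.range (J.orderEmbOfFin rfl).toEmbedding ↔ i ∈ J :=
    Set.ext_iff.1 (J.range_orderEmbOfFin rfl) i
  constructor
  · rintro ⟨J, m⟩ ⟨J', m'⟩ h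
    obtain rfl : J = J' := by
      ext i
      rw [← mem_range, ← mem_range, ← extendLast_ne_last_iff (m := m),
        ← extendLast_ne_last_iff (m := m')]
      exact (congrFun h i).congr_left.not
    exact congrArg _ (extendLast_injective _ h)
  · intro m
    have := Fintype.ofFinite ι
    obtain ⟨m', hm'⟩ := exists_extendLast_eq
      (e := (({i | m i ≠ Fin.last N} : Finset ι).orderEmbOfFin rfl).toEmbedding) (m := m)
      (fun i => by simp only [mem_range, mem_filter_univ])
    exact ⟨⟨_, m'⟩, hm'⟩

lemma sum_eq_sum_sum_extendLast [LinearOrder ι] [Fintype ι] [AddCommMonoid R]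
    (f : (ι → Fin (N + 1)) → R) :
    ∑ m, f m = ∑ J : Finset ι, ∑ m' : Fin #J → Fin N,
      f (extendLast (J.orderEmbOfFin rfl).toEmbedding m') := by
  rw [← Fintype.sum_sigma']
  exact (bijective_extendLast_orderEmbOfFin.sum_comp f).symm

variable [Fintype ι] [Fintype κ] [DecidableEq ι] [CommMonoid R]

@[to_additive]
lemma prod_apply_extendLast (e : κ ↪ ι) (m : κ → Fin N) (f : Fin (N + 1) → ι → R) :
    ∏ i, f (extendLast e m i) i =
      (∏ i ∈ (univ.map e)ᶜ, f (Fin.last N) i) * ∏ a, f (m a).castSucc (e a) := by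
  rw [← prod_compl_mul_prod (univ.map e), prod_map]
  simp only [extendLast_apply]
  congr 1
  refine prod_congr rfl fun i hi => ?_
  rw [extendLast_of_notMem_range]
  simpa using hi

lemma prod_filter_extendLast_lt (e : κ ↪ ι) (m : κ → Fin N) (c : ι → ι → R) :
    ∏ p : ι × ι with extendLast e m p.1 < extendLast e m p.2, c p.1 p.2 =
      (∏ i ∈ univ.map e, ∏ j ∈ (univ.map e)ᶜ, c i j) *
        ∏ p : κ × κ with m p.1 < m p.2, c (e p.1) (e p.2) := by
  have row_last (i : ι) : (∏ j, if Fin.last N < extendLast e m j then c i j else 1) = 1 :=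
    prod_eq_one fun j _ => if_neg (Fin.le_last _).not_gt
  have row_castSucc (r : Fin N) (i : ι) :
      (∏ j, if r.castSucc < extendLast e m j then c i j else 1) =
        (∏ j ∈ (univ.map e)ᶜ, c i j) * ∏ b, if r < m b then c i (e b) else 1 := by
    rw [prod_apply_extendLast e m fun s j => if r.castSucc < s then c i j else 1]
    simp only [Fin.castSucc_lt_last, if_true, Fin.castSucc_lt_castSucc_iff]
  simp only [prod_filter, Fintype.prod_prod_type]
  rw [prod_apply_extendLast e m fun r i => ∏ j, if r < extendLast e m j then c i j else 1]
  simp only [row_last, row_castSucc, prod_const_one, one_mul, prod_mul_distrib, prod_map]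

end ExtendLast

section OccupationSum

open Finset

variable {R : Type*} {M N k : ℕ}

lemma nk_extendLast_castSucc (e : Fin k ↪ Fin M) (m : Fin k → Fin N) (s : Fin N) :
    nk (extendLast e m) s.castSucc = nk m s := by
  simp only [nk, card_filter]
  rw [sum_apply_extendLast e m fun r _ => if r = s.castSucc then 1 else 0]
  simp [(Fin.castSucc_ne_last s).symm]

lemma nk_extendLast_last (e : Fin k ↪ Fin M) (m : Fin k → Fin N) :
    nk (extendLast e m) (Fin.last N) = #(univ.map e)ᶜ := by
  simp only [nk, card_filter]
  rw [sum_apply_extendLast e m fun r _ => if r = Fin.last N then 1 else 0]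
  simp

lemma forall_nk_extendLast_eq_iff (e : Fin k ↪ Fin M) (m : Fin k → Fin N)
    (d : Fin (N + 1) → ℕ) :
    (∀ s, nk (extendLast e m) s = d s) ↔
      #(univ.map e)ᶜ = d (Fin.last N) ∧ ∀ s : Fin N, nk m s = d s.castSucc := by
  rw [Fin.forall_fin_succ', nk_extendLast_last, and_comm]
  simp only [nk_extendLast_castSucc]

lemma prod_filter_castSucc_lt [CommMonoid R] (r : Fin N) (f : Fin (N + 1) → R) :
    ∏ s with r.castSucc < s, f s = f (Fin.last N) * ∏ s : Fin N with r < s, f s.castSucc := by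
  simp only [prod_filter, Fin.prod_univ_castSucc, Fin.castSucc_lt_castSucc_iff,
    Fin.castSucc_lt_last, if_true, mul_comm]

/-- The weight of an assignment `m` of `M` particles to `N` sites: a particle `i` contributes
`a s n i` at its site `s`, where `n` is the occupation number of `s`, and `b s i` at every larger
site `s`; a pair of particles at increasing sites contributes `c i j`. -/
def assignmentWeight [CommMonoid R] (a : Fin N → ℕ → Fin M → R) (b : Fin N → Fin M → R)
    (c : Fin M → Fin M → R) (m : Fin M → Fin N) : R :=
  (∏ i, a (m i) (nk m (m i)) i * ∏ s with m i < s, b s i) *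
    ∏ p : Fin M × Fin M with m p.1 < m p.2, c p.1 p.2

/-- The total weight of the assignments with occupation numbers `d`, the form of `a^ℓ_d` with
arbitrary factors. -/
def occupationSum [CommSemiring R] (a : Fin N → ℕ → Fin M → R) (b : Fin N → Fin M → R)
    (c : Fin M → Fin M → R) (d : Fin N → ℕ) : R :=
  ∑ m : Fin M → Fin N with ∀ s, nk m s = d s, assignmentWeight a b c m

lemma assignmentWeight_extendLast [CommMonoid R] (e : Fin k ↪ Fin M) (m : Fin k → Fin N)
    (a : Fin (N + 1) → ℕ → Fin M → R) (b : Fin (N + 1) → Fin M → R) (c : Fin M → Fin M → R) :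
    assignmentWeight a b c (extendLast e m) =
      (∏ i ∈ (univ.map e)ᶜ, a (Fin.last N) #(univ.map e)ᶜ i) *
        (∏ i ∈ univ.map e, b (Fin.last N) i) *
        (∏ i ∈ univ.map e, ∏ j ∈ (univ.map e)ᶜ, c i j) *
        assignmentWeight (fun s n i => a s.castSucc n (e i)) (fun s i => b s.castSucc (e i))
          (fun i j => c (e i) (e j)) m := by
  have no_larger_site : ({s | Fin.last N < s} : Finset (Fin (N + 1))) = ∅ :=
    filter_false_of_mem fun s _ => (Fin.le_last s).not_gt
  have single_particle :
      ∏ i, a (extendLast e m i) (nk (extendLast e m) (extendLast e m i)) i *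
          ∏ s with extendLast e m i < s, b s i =
        (∏ i ∈ (univ.map e)ᶜ, a (Fin.last N) #(univ.map e)ᶜ i) *
          ((∏ i ∈ univ.map e, b (Fin.last N) i) *
            ∏ i, a (m i).castSucc (nk m (m i)) (e i) * ∏ s with m i < s, b s.castSucc (e i)) := by
    rw [prod_apply_extendLast e m fun r i => a r (nk (extendLast e m) r) i * ∏ s with r < s, b s i]
    simp only [nk_extendLast_last, nk_extendLast_castSucc, no_larger_site, prod_empty, mul_one,
      prod_filter_castSucc_lt, mul_left_comm (a _ _ _), prod_mul_distrib, prod_map]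
  rw [assignmentWeight, single_particle, prod_filter_extendLast_lt, assignmentWeight]
  ac_rfl

lemma occupationSum_succ [CommSemiring R] (a : Fin (N + 1) → ℕ → Fin M → R)
    (b : Fin (N + 1) → Fin M → R) (c : Fin M → Fin M → R) (d : Fin (N + 1) → ℕ) :
    occupationSum a b c d =
      ∑ J : Finset (Fin M) with #Jᶜ = d (Fin.last N),
        (∏ i ∈ Jᶜ, a (Fin.last N) #Jᶜ i) * (∏ i ∈ J, b (Fin.last N) i) *
          (∏ i ∈ J, ∏ j ∈ Jᶜ, c i j) *
          occupationSum (fun s n i => a s.castSucc n (J.orderEmbOfFin rfl i))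
            (fun s i => b s.castSucc (J.orderEmbOfFin rfl i))
            (fun i j => c (J.orderEmbOfFin rfl i) (J.orderEmbOfFin rfl j))
            (fun s => d s.castSucc) := by
  simp only [occupationSum, sum_filter]
  rw [sum_eq_sum_sum_extendLast]
  refine sum_congr rfl fun J _ => ?_
  simp only [forall_nk_extendLast_eq_iff, assignmentWeight_extendLast, map_orderEmbOfFin_univ,
    RelEmbedding.coe_toEmbedding]
  by_cases hJ : #Jᶜ = d (Fin.last N)
  · simp only [hJ, true_and, if_true, mul_sum, mul_ite, mul_zero]
  · simp only [hJ, false_and, if_false, sum_const_zero]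

end OccupationSum

section TrigonometricWeights

variable {M N : ℕ}

/-- The factor of `a^ℓ_d(x;t)` for the index `i` at its own value `s = m i`, where `n` is the
number of indices sent to `s`. -/
def ownSiteFactor (η : ℂ) (ℓ t : Fin N → ℂ) (x : Fin M → ℂ) (s : Fin N) (n : ℕ) (i : Fin M) : ℂ :=
  -(exp (((n : ℂ) / 2 - ℓ s) * η) * sinh η) / sinh (t s - x i - (1 / 2 + ℓ s) * η)

/-- The factor of `a^ℓ_d(x;t)` for the index `i` and a value `s > m i`. -/
def largerSiteFactor (η : ℂ) (ℓ t : Fin N → ℂ) (x : Fin M → ℂ) (s : Fin N) (i : Fin M) : ℂ :=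
  sinh (t s - x i - (1 / 2 - ℓ s) * η) / sinh (t s - x i - (1 / 2 + ℓ s) * η)

/-- The factor of `a^ℓ_d(x;t)` for a pair of indices with `m i < m j`. -/
def pairFactor (η : ℂ) (x : Fin M → ℂ) (i j : Fin M) : ℂ :=
  sinh (x i - x j + η) / sinh (x i - x j)

lemma aW_eq_occupationSum (η : ℂ) (ℓ : Fin N → ℂ) (d : Fin N → ℕ) (x : Fin M → ℂ)
    (t : Fin N → ℂ) :
    aW η N M ℓ d x t =
      occupationSum (ownSiteFactor η ℓ t x) (largerSiteFactor η ℓ t x) (pairFactor η x) d :=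
  rfl

lemma prod_ownSiteFactor (η : ℂ) (ℓ t : Fin N → ℂ) (x : Fin M → ℂ) (s : Fin N) (n : ℕ)
    (K : Finset (Fin M)) :
    ∏ i ∈ K, ownSiteFactor η ℓ t x s n i =
      exp ((K.card : ℂ) * ((n : ℂ) / 2 - ℓ s) * η) *
        ∏ i ∈ K, -sinh η / sinh (t s - x i - (1 / 2 + ℓ s) * η) := by
  simp only [ownSiteFactor, ← mul_neg, mul_div_assoc, Finset.prod_mul_distrib, Finset.prod_const,
    mul_assoc, exp_nat_mul]

end TrigonometricWeights

/-- the functions `a^ℓ_d` satisfy the quantum affine `sl₂`-recursion. -/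
theorem stmt17 (η : ℂ) :
    (∀ (ℓ : Fin 0 → ℂ) (d : Fin 0 → ℕ) (x : Fin 0 → ℂ) (t : Fin 0 → ℂ),
      aW η 0 0 ℓ d x t = 1) ∧
    ∀ (N M : ℕ) (ℓ : Fin (N + 1) → ℂ) (d : Fin (N + 1) → ℕ), (∑ s, d s) = M →
      ∀ (x : Fin M → ℂ) (t : Fin (N + 1) → ℂ),
        (∀ (s : Fin (N + 1)) (i : Fin M), sinh (t s - x i - (1 / 2 + ℓ s) * η) ≠ 0) →
        (∀ i j : Fin M, i ≠ j → sinh (x i - x j) ≠ 0) →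
        aW η (N + 1) M ℓ d x t =
          exp ((d (Fin.last N) : ℂ) * ((d (Fin.last N) : ℂ) / 2 - ℓ (Fin.last N)) * η) *
            ∑ J ∈ Finset.univ.filter fun J : Finset (Fin M) => Jᶜ.card = d (Fin.last N),
              (∏ i ∈ Jᶜ,
                  -sinh η / sinh (t (Fin.last N) - x i - (1 / 2 + ℓ (Fin.last N)) * η)) *
                (∏ i ∈ J,
                  sinh (t (Fin.last N) - x i - (1 / 2 - ℓ (Fin.last N)) * η) /
                    sinh (t (Fin.last N) - x i - (1 / 2 + ℓ (Fin.last N)) * η)) *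
                (∏ i ∈ J, ∏ j ∈ Jᶜ, sinh (x i - x j + η) / sinh (x i - x j)) *
                aW η N J.card (fun s => ℓ s.castSucc) (fun s => d s.castSucc)
                  (fun i => x (J.orderEmbOfFin rfl i)) (fun s => t s.castSucc) := by
  refine ⟨fun ℓ d x t => by simp [aW], fun N M ℓ d _ x t _ _ => ?_⟩
  rw [aW_eq_occupationSum, occupationSum_succ, Finset.mul_sum]
  refine Finset.sum_congr rfl fun J hJ => ?_
  rw [prod_ownSiteFactor, (Finset.mem_filter.1 hJ).2]
  simp only [mul_assoc]
  rfl

end BQKZ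
end
end
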